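/- arXiv:2007.07738 — 3 statements merged into one kernel-verified Lean document; each statement's English description precedes it below -/
import Mathlib

section
/- Let D be a finite digraph, let T ⊆ V(D) with |T| = s, let k ≥ 0 be an integer, and let r be an integer with r ≥ ⌊s/2⌋. If T is (k,r)-linked in D, then D admits a haven of order k+1. -/
/-- A digraph on vertex type `V`, given by its adjacency relation
(loops are allowed; parallel edges are irrelevant here). -/
structure Dgraph (V : Type) where
  Adj : V → V → Prop

namespace Dgraph

variable {V : Type}

/-- There is a directed walk from `u` to `v` in `D` using only vertices of `S`. -/
def ReachIn (D : Dgraph V) (S : Set V) (u v : V) : Prop :=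
  u ∈ S ∧ v ∈ S ∧ Relation.ReflTransGen (fun a b => a ∈ S ∧ b ∈ S ∧ D.Adj a b) u v

/-- The subdigraph of `D` induced on `S` is strongly connected. -/
def StronglyConnectedOn (D : Dgraph V) (S : Set V) : Prop :=
  ∀ u ∈ S, ∀ v ∈ S, D.ReachIn S u v

/-- `C` is the vertex set of a strong component of the subdigraph of `D` induced on `A`,
i.e. a maximal subset of `A` inducing a strongly connected subdigraph. -/
def IsStrongComponentOn (D : Dgraph V) (A C : Set V) : Prop :=
  C ⊆ A ∧ D.StronglyConnectedOn C ∧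
    ∀ C' : Set V, C ⊆ C' → C' ⊆ A → D.StronglyConnectedOn C' → C' = C

/-- `Z` is a `(T, r)`-balanced separator of `D`: every strong component of `D \ Z`
contains at most `r` vertices of `T`. -/
def IsBalancedSeparator (D : Dgraph V) (T : Set V) (r : ℕ) (Z : Set V) : Prop :=
  ∀ C : Set V, D.IsStrongComponentOn Zᶜ C → (C ∩ T).ncard ≤ r

/-- `T` is `(k, r)`-linked in `D`: every `(T, r)`-balanced separator has size at least `k + 1`. -/
def IsLinked (D : Dgraph V) (T : Set V) (k r : ℕ) : Prop :=
  ∀ Z : Set V, D.IsBalancedSeparator T r Z → k + 1 ≤ Z.ncard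

/-- `β` is a haven of order `k` in `D`: it assigns to every `Z` with `|Z| ≤ k - 1`
the vertex set of a strong component of `D \ Z`, monotonically. -/
def IsHaven (D : Dgraph V) (k : ℕ) (β : Set V → Set V) : Prop :=
  (∀ Z : Set V, Z.ncard < k → D.IsStrongComponentOn Zᶜ (β Z)) ∧
  (∀ Z Z' : Set V, Z.ncard < k → Z' ⊆ Z → β Z ⊆ β Z')

/-- A bramble in `D`: a family of (vertex sets of) strongly connected subdigraphs
any two of which touch. -/
def IsBramble (D : Dgraph V) (ℬ : Set (Set V)) : Prop :=
  (∀ B ∈ ℬ, D.StronglyConnectedOn B) ∧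
  ∀ B ∈ ℬ, ∀ B' ∈ ℬ,
    (B ∩ B').Nonempty ∨
      ((∃ u ∈ B, ∃ v ∈ B', D.Adj u v) ∧ (∃ u ∈ B', ∃ v ∈ B, D.Adj u v))

/-- `C` is a hitting set of the family `ℬ`. -/
def IsHittingSet (ℬ : Set (Set V)) (C : Set V) : Prop :=
  ∀ B ∈ ℬ, (C ∩ B).Nonempty

/-- The order of a bramble: the minimum size of a hitting set. -/
noncomputable def brambleOrder (ℬ : Set (Set V)) : ℕ :=
  sInf {n : ℕ | ∃ C : Set V, IsHittingSet ℬ C ∧ C.ncard = n}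

/-- The `T`-bramble with threshold `g`: all induced strongly connected subdigraphs
containing at least `g` vertices of `T`. -/
def TBramble (D : Dgraph V) (T : Set V) (g : ℕ) : Set (Set V) :=
  {B : Set V | D.StronglyConnectedOn B ∧ g ≤ (B ∩ T).ncard}

/-- The restricted bramble `ℬ(X)`: elements of `ℬ` intersecting `X`. -/
def restrictedBramble (ℬ : Set (Set V)) (X : Set V) : Set (Set V) :=
  {B ∈ ℬ | (B ∩ X).Nonempty}

/-- The complement bramble `ℬ̄(X)`: elements of `ℬ` disjoint from `X`. -/
def complementBramble (ℬ : Set (Set V)) (X : Set V) : Set (Set V) :=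
  {B ∈ ℬ | B ∩ X = ∅}

/-- A directed path in `D`, as a duplicate-free list of consecutively adjacent vertices. -/
def IsPath (D : Dgraph V) (P : List V) : Prop :=
  P.Nodup ∧ P.Chain' D.Adj

/-- A directed path in `D` starting in `A` and ending in `B`. -/
def IsPathFromTo (D : Dgraph V) (P : List V) (A B : Set V) : Prop :=
  D.IsPath P ∧ ∃ h : P ≠ [], P.head h ∈ A ∧ P.getLast h ∈ B

/-- There are `n` pairwise vertex-disjoint directed paths from `A` to `B` in `D`. -/
def HasDisjointPaths (D : Dgraph V) (A B : Set V) (n : ℕ) : Prop :=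
  ∃ Ps : Fin n → List V, (∀ i, D.IsPathFromTo (Ps i) A B) ∧
    ∀ i j, i ≠ j → ∀ v, v ∈ Ps i → v ∉ Ps j

/-- `A` is well-linked in `D`. -/
def WellLinked (D : Dgraph V) (A : Set V) : Prop :=
  ∀ X Y : Set V, X ⊆ A → Y ⊆ A → Disjoint X Y → X.ncard = Y.ncard →
    D.HasDisjointPaths X Y X.ncard

end Dgraph

/-! Since `r ≥ ⌊|T| / 2⌋`, deleting at most `k` vertices always leaves a strong component that holds
more than half of `T`. Any two such components share a vertex of `T`, so their union is strongly
connected; by maximality, deleting fewer vertices can only enlarge the component. -/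

theorem inter_nonempty_of_ncard_lt_ncard_add_ncard {α : Type*} {A B T : Set α}
    (hT : T.Finite) (hA : A ⊆ T) (hB : B ⊆ T) (hcard : T.ncard < A.ncard + B.ncard) :
    (A ∩ B).Nonempty := by
  classical
  lift T to Finset α using hT
  lift A to Finset α using T.finite_toSet.subset hA
  lift B to Finset α using T.finite_toSet.subset hB
  simp only [Set.ncard_coe_finset] at hcard
  exact_mod_cast Finset.inter_nonempty_of_card_lt_card_add_card
    (Finset.coe_subset.mp hA) (Finset.coe_subset.mp hB) hcard

namespace Dgraph

variable {V : Type} {D : Dgraph V}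

theorem ReachIn.mono {S S' : Set V} {u v : V} (hSS' : S ⊆ S') (h : D.ReachIn S u v) :
    D.ReachIn S' u v :=
  ⟨hSS' h.1, hSS' h.2.1,
    Relation.ReflTransGen.mono (fun _ _ hab => ⟨hSS' hab.1, hSS' hab.2.1, hab.2.2⟩) _ _ h.2.2⟩

theorem ReachIn.trans {S : Set V} {u v w : V} (huv : D.ReachIn S u v) (hvw : D.ReachIn S v w) :
    D.ReachIn S u w :=
  ⟨huv.1, hvw.2.1, huv.2.2.trans hvw.2.2⟩

theorem StronglyConnectedOn.union {S S' : Set V} (hS : D.StronglyConnectedOn S)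
    (hS' : D.StronglyConnectedOn S') (hne : (S ∩ S').Nonempty) :
    D.StronglyConnectedOn (S ∪ S') := by
  obtain ⟨w, hwS, hwS'⟩ := hne
  have to_w : ∀ u ∈ S ∪ S', D.ReachIn (S ∪ S') u w := by
    rintro u (hu | hu)
    · exact (hS u hu w hwS).mono Set.subset_union_left
    · exact (hS' u hu w hwS').mono Set.subset_union_right
  have from_w : ∀ v ∈ S ∪ S', D.ReachIn (S ∪ S') w v := by
    rintro v (hv | hv)
    · exact (hS w hwS v hv).mono Set.subset_union_left
    · exact (hS' w hwS' v hv).mono Set.subset_union_right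
  exact fun u hu v hv => (to_w u hu).trans (from_w v hv)

theorem IsStrongComponentOn.subset_of_inter_nonempty {A C S : Set V}
    (hC : D.IsStrongComponentOn A C) (hS : D.StronglyConnectedOn S) (hSA : S ⊆ A)
    (hne : (S ∩ C).Nonempty) : S ⊆ C := by
  obtain ⟨hCA, hCconn, hCmax⟩ := hC
  have hunion : S ∪ C = C :=
    hCmax (S ∪ C) Set.subset_union_right (Set.union_subset hSA hCA) (hS.union hCconn hne)
  exact Set.union_eq_right.mp hunion

theorem IsLinked.exists_isStrongComponentOn_lt_ncard {T Z : Set V} {k r : ℕ}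
    (hT : D.IsLinked T k r) (hZ : Z.ncard < k + 1) :
    ∃ C, D.IsStrongComponentOn Zᶜ C ∧ r < (C ∩ T).ncard := by
  have hnot : ¬ D.IsBalancedSeparator T r Z := fun hbal => hZ.not_ge (hT Z hbal)
  simpa only [IsBalancedSeparator, not_forall, not_le, exists_prop] using hnot

theorem isHaven_of_inter_nonempty [Finite V] {k : ℕ} {β : Set V → Set V}
    (hcomp : ∀ Z, Z.ncard < k → D.IsStrongComponentOn Zᶜ (β Z))
    (hne : ∀ Z Z', Z.ncard < k → Z'.ncard < k → (β Z ∩ β Z').Nonempty) : D.IsHaven k β := by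
  refine ⟨hcomp, fun Z Z' hZ hsub => ?_⟩
  have hZ' : Z'.ncard < k := (Set.ncard_le_ncard hsub).trans_lt hZ
  obtain ⟨hβZ, hconn, -⟩ := hcomp Z hZ
  exact (hcomp Z' hZ').subset_of_inter_nonempty hconn
    (hβZ.trans (Set.compl_subset_compl.mpr hsub)) (hne Z Z' hZ hZ')

end Dgraph

open Dgraph in
/-- if `T ⊆ V(D)` has `|T| = s`, `r ≥ ⌊s/2⌋`, and `T` is `(k, r)`-linked
in the finite digraph `D`, then `D` admits a haven of order `k + 1`. -/
theorem stmt0 {V : Type} [Finite V] (D : Dgraph V) (T : Set V) (s k r : ℕ)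
    (hT : T.ncard = s) (hr : s / 2 ≤ r) (hlinked : D.IsLinked T k r) :
    ∃ β : Set V → Set V, D.IsHaven (k + 1) β := by
  choose! β hcomp hmajority using fun Z =>
    hlinked.exists_isStrongComponentOn_lt_ncard (Z := Z)
  refine ⟨β, isHaven_of_inter_nonempty hcomp fun Z Z' hZ hZ' => ?_⟩
  have hcard : T.ncard < (β Z ∩ T).ncard + (β Z' ∩ T).ncard := by
    have hgt := hmajority Z hZ
    have hgt' := hmajority Z' hZ'
    omega
  have hshared : ((β Z ∩ T) ∩ (β Z' ∩ T)).Nonempty :=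
    inter_nonempty_of_ncard_lt_ncard_add_ncard T.toFinite Set.inter_subset_right
      Set.inter_subset_right hcard
  exact hshared.mono (Set.inter_subset_inter Set.inter_subset_left Set.inter_subset_left)
end

section
/- Let D be a finite digraph, k ≥ 1 an integer, T ⊆ V(D) a (k−1,k−1)-linked set of size 2k−1, and B_T the T-bramble. Then there exists a directed path P in D whose vertex set V(P) is a hitting set of B_T. -/
/-!
Keep a path that starts in a member `B` of the `T`-bramble and never returns to `B`. If it misses a
member `B'`, then `B` and `B'`, each containing more than half of `T`, share some `t ∈ T`; a walk
inside `B` from `t` to the start of the path extends the path backwards as far as `t`. This full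
extension meets every member containing `t`. Take the shortest of its suffixes that extends the old
path and still does so: without its first vertex it would miss some member containing `t`, so it
starts in that member and never returns, and `t` has joined those vertices of `T` all of whose
members are met. As `T` is finite, repeating this ends with a path meeting every member.
-/

lemma exists_suffix_not_and_cons {α : Type*} {p : List α → Prop} {P Q : List α}
    (hPQ : P <:+ Q) (hP : ¬ p P) (hQ : p Q) :
    ∃ u L, P <:+ L ∧ u :: L <:+ Q ∧ ¬ p L ∧ p (u :: L) := by
  induction Q with
  | nil => exact absurd (List.suffix_nil.mp hPQ ▸ hQ) hP
  | cons a Q ih =>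
    have hPQ' : P <:+ Q := (List.suffix_cons_iff.mp hPQ).resolve_left (by rintro rfl; exact hP hQ)
    by_cases hpQ : p Q
    · obtain ⟨u, L, hPL, hLQ, hL⟩ := ih hPQ' hpQ
      exact ⟨u, L, hPL, hLQ.trans (List.suffix_cons a Q), hL⟩
    · exact ⟨a, Q, hPQ', List.suffix_rfl, hpQ, hQ⟩

lemma inter_inter_nonempty_of_ncard_lt {α : Type*} {A B T : Set α} (hfin : T.Finite)
    (hcard : T.ncard < (A ∩ T).ncard + (B ∩ T).ncard) : (A ∩ B ∩ T).Nonempty := by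
  rw [Set.inter_inter_distrib_right, ← Set.not_disjoint_iff_nonempty_inter]
  intro hdisj
  rw [← Set.ncard_union_eq hdisj (hfin.inter_of_right A) (hfin.inter_of_right B)] at hcard
  exact hcard.not_ge <|
    Set.ncard_le_ncard (Set.union_subset Set.inter_subset_right Set.inter_subset_right) hfin

namespace Dgraph

variable {V : Type} {D : Dgraph V}

lemma IsHittingSet.mono {ℬ : Set (Set V)} {X Y : Set V} (hX : IsHittingSet ℬ X) (hXY : X ⊆ Y) :
    IsHittingSet ℬ Y :=
  fun B hB ↦ (hX B hB).mono (Set.inter_subset_inter_left B hXY)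

lemma isPath_nil : D.IsPath [] :=
  ⟨List.nodup_nil, List.isChain_nil⟩

lemma isPath_singleton (v : V) : D.IsPath [v] :=
  ⟨List.nodup_singleton v, List.isChain_singleton v⟩

lemma IsPath.cons {u v : V} {l : List V} (h : D.IsPath (v :: l)) (huv : D.Adj u v)
    (hu : u ∉ v :: l) : D.IsPath (u :: v :: l) :=
  ⟨List.nodup_cons.mpr ⟨hu, h.1⟩, List.IsChain.cons_cons huv h.2⟩

lemma IsPath.suffix {P Q : List V} (hQ : D.IsPath Q) (hPQ : P <:+ Q) : D.IsPath P :=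
  ⟨hQ.1.sublist hPQ.sublist, List.IsChain.suffix hQ.2 hPQ⟩

lemma IsPath.exists_extension_of_reachIn {S : Set V} {u v : V} {l : List V}
    (hP : D.IsPath (v :: l)) (hl : ∀ x ∈ l, x ∉ S) (huv : D.ReachIn S u v) :
    ∃ L, D.IsPath (u :: L) ∧ v :: l <:+ u :: L := by
  obtain ⟨-, -, hwalk⟩ := huv
  induction hwalk using Relation.ReflTransGen.head_induction_on with
  | refl => exact ⟨l, hP, List.suffix_rfl⟩
  | @head a c hac _ ih =>
    obtain ⟨haS, -, hadj⟩ := hac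
    obtain ⟨L, hL, hlL⟩ := ih
    by_cases ha : a ∈ c :: L
    · obtain ⟨s, t, hst⟩ := List.append_of_mem ha
      have htL : a :: t <:+ c :: L := ⟨s, hst.symm⟩
      refine ⟨t, hL.suffix htL, ?_⟩
      rcases List.suffix_or_suffix_of_suffix hlL htL with hlt | htl
      · exact hlt
      · rcases List.suffix_cons_iff.mp htl with heq | htl'
        · exact heq ▸ List.suffix_rfl
        · exact absurd haS (hl a (htl'.subset List.mem_cons_self))
    · exact ⟨c :: L, hL.cons hadj ha, hlL.trans (List.suffix_cons a _)⟩

/-- `P` is a directed path that starts in `B` and never returns to `B`. This is the invariant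
under which a path can be extended backwards through `B`. -/
def IsPathLeaving (D : Dgraph V) (P : List V) (B : Set V) : Prop :=
  D.IsPath P ∧ ∃ v l, P = v :: l ∧ v ∈ B ∧ ∀ x ∈ l, x ∉ B

lemma isPathLeaving_singleton {B : Set V} {v : V} (hv : v ∈ B) : D.IsPathLeaving [v] B :=
  ⟨isPath_singleton v, v, [], rfl, hv, by simp⟩

lemma IsPathLeaving.exists_extension {ℬ : Set (Set V)} {P : List V} {B : Set V} {t : V}
    (hP : D.IsPathLeaving P B) (hB : D.StronglyConnectedOn B) (ht : t ∈ B)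
    (hmiss : ¬ IsHittingSet {C ∈ ℬ | t ∈ C} {x | x ∈ P}) :
    ∃ Q, (∃ C ∈ ℬ, D.IsPathLeaving Q C) ∧ P ⊆ Q ∧
      IsHittingSet {C ∈ ℬ | t ∈ C} {x | x ∈ Q} := by
  obtain ⟨hpath, v, l, rfl, hv, hl⟩ := hP
  obtain ⟨L, hL, hlL⟩ := hpath.exists_extension_of_reachIn hl (hB t ht v hv)
  have hLhit : IsHittingSet {C ∈ ℬ | t ∈ C} {x | x ∈ t :: L} :=
    fun C hC ↦ ⟨t, List.mem_cons_self, hC.2⟩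
  obtain ⟨u, M, hlM, hML, hMmiss, hMhit⟩ := exists_suffix_not_and_cons
    (p := fun Q ↦ IsHittingSet {C ∈ ℬ | t ∈ C} {x | x ∈ Q}) hlL hmiss hLhit
  obtain ⟨C, hC, hMC⟩ : ∃ C ∈ {C ∈ ℬ | t ∈ C}, ∀ x ∈ M, x ∉ C := by
    simpa [IsHittingSet, Set.Nonempty, and_assoc] using hMmiss
  obtain ⟨x, hx, hxC⟩ := hMhit C hC
  obtain rfl : x = u := (List.mem_cons.mp hx).resolve_right fun hxM ↦ hMC x hxM hxC
  exact ⟨x :: M, ⟨C, hC.1, hL.suffix hML, x, M, rfl, hxC, hMC⟩,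
    List.subset_cons_of_subset x hlM.subset, hMhit⟩

theorem exists_isPath_isHittingSet {ℬ : Set (Set V)} {T : Set V} (hT : T.Finite)
    (hconn : ∀ B ∈ ℬ, D.StronglyConnectedOn B)
    (hmeet : ∀ B ∈ ℬ, ∀ B' ∈ ℬ, (B ∩ B' ∩ T).Nonempty) :
    ∃ P, D.IsPath P ∧ IsHittingSet ℬ {v | v ∈ P} := by
  obtain rfl | ⟨B₀, hB₀⟩ := ℬ.eq_empty_or_nonempty
  · exact ⟨[], isPath_nil, fun _ h ↦ h.elim⟩
  obtain ⟨v, ⟨hv, -⟩, -⟩ := hmeet B₀ hB₀ B₀ hB₀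
  let leaving : Set (List V) := {P | ∃ B ∈ ℬ, D.IsPathLeaving P B}
  let settled (P : List V) : Set V := {t ∈ T | IsHittingSet {C ∈ ℬ | t ∈ C} {x | x ∈ P}}
  have hfin : (settled '' leaving).Finite :=
    hT.finite_subsets.subset (Set.image_subset_iff.mpr fun P _ ↦ Set.sep_subset T _)
  obtain ⟨P, ⟨B, hB, hP⟩, hmax⟩ := Set.Finite.exists_maximalFor' settled leaving hfin
    ⟨[v], B₀, hB₀, isPathLeaving_singleton hv⟩
  refine ⟨P, hP.1, fun B' hB' ↦ ?_⟩
  obtain ⟨t, ⟨htB, htB'⟩, htT⟩ := hmeet B hB B' hB'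
  suffices ht : IsHittingSet {C ∈ ℬ | t ∈ C} {x | x ∈ P} from ht B' ⟨hB', htB'⟩
  by_contra hmiss
  obtain ⟨Q, hQ, hPQ, hQhit⟩ := hP.exists_extension (hconn B hB) htB hmiss
  have hle : settled P ⊆ settled Q := fun s hs ↦ ⟨hs.1, hs.2.mono hPQ⟩
  exact hmiss (hmax hQ hle ⟨htT, hQhit⟩).2

end Dgraph

open Dgraph in
theorem stmt8_general {V : Type} (D : Dgraph V) (k : ℕ) (T : Set V) (hfin : T.Finite)
    (hT : T.ncard < 2 * k) :
    ∃ P : List V, D.IsPath P ∧ IsHittingSet (D.TBramble T k) {v | v ∈ P} :=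
  exists_isPath_isHittingSet hfin (fun _ hB ↦ hB.1) fun _ hB _ hB' ↦
    inter_inter_nonempty_of_ncard_lt hfin (hT.trans_le (two_mul k ▸ add_le_add hB.2 hB'.2))

open Dgraph in
/-- if `T` is a `(k-1, k-1)`-linked set of size `2k - 1` in the finite
digraph `D`, then there is a directed path `P` in `D` whose vertex set is a hitting set
of the `T`-bramble `B_T`. -/
theorem stmt8 {V : Type} [Finite V] (D : Dgraph V) (k : ℕ) (hk : 1 ≤ k) (T : Set V)
    (hT : T.ncard = 2 * k - 1) (hlinked : D.IsLinked T (k - 1) (k - 1)) :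
    ∃ P : List V, D.IsPath P ∧ IsHittingSet (D.TBramble T k) {v | v ∈ P} :=
  stmt8_general D k T T.toFinite (by omega)
end

section
/- Let D be a finite digraph, let ℓ, p ≥ 1 be integers, let P be a directed path in D, and let A ⊆ V(P) be a well-linked set in D with |A| = 2ℓp. Then D contains an ℓ-linked path system of order p. -/
/-! Cut `P` into consecutive subpaths, each containing `2ℓ` vertices of `A`, and let `A_i^in` and
`A_i^out` be the first and the last `ℓ` of these on the `i`-th subpath. Both are well-linked as
subsets of `A`, and for `i ≠ j` the sets `A_i^out` and `A_j^in` are disjoint subsets of `A` of equal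
size, so the well-linkedness of `A` itself provides the linkage between them. -/

section List

open scoped Function

variable {α : Type*}

theorem exists_append_eq_and_countP_eq (q : α → Bool) {l : List α} {k : ℕ} (h : k ≤ l.countP q) :
    ∃ l₁ l₂, l₁ ++ l₂ = l ∧ l₁.countP q = k := by
  induction l generalizing k with
  | nil => exact ⟨[], [], rfl, (Nat.le_zero.1 h).symm⟩
  | cons a l ih =>
    obtain rfl | hk := Nat.eq_zero_or_pos k
    · exact ⟨[], a :: l, rfl, rfl⟩
    rw [List.countP_cons] at h
    obtain ⟨l₁, l₂, rfl, hl₁⟩ := ih (k := k - if q a then 1 else 0) (by omega)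
    exact ⟨a :: l₁, l₂, rfl, by rw [List.countP_cons, hl₁]; split <;> omega⟩

theorem exists_flatten_prefix_and_countP_eq (q : α → Bool) {n k : ℕ} {l : List α}
    (h : n * k ≤ l.countP q) :
    ∃ L : List (List α), L.length = n ∧ L.flatten <+: l ∧ ∀ b ∈ L, b.countP q = k := by
  induction n generalizing l with
  | zero => exact ⟨[], rfl, List.nil_prefix, by simp⟩
  | succ n ih =>
    rw [Nat.succ_mul] at h
    obtain ⟨b, l, rfl, hb⟩ := exists_append_eq_and_countP_eq q (le_of_add_le_right h)
    rw [List.countP_append] at h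
    obtain ⟨L, hlen, hpre, hL⟩ := ih (l := l) (by omega)
    exact ⟨b :: L, by rw [List.length_cons, hlen], (List.prefix_append_right_inj b).2 hpre,
      List.forall_mem_cons.2 ⟨hb, hL⟩⟩

theorem infix_flatten_of_mem {b : List α} {L : List (List α)} (h : b ∈ L) : b <:+: L.flatten := by
  obtain ⟨L₁, L₂, rfl⟩ := List.append_of_mem h
  exact ⟨L₁.flatten, L₂.flatten, by simp⟩

theorem pairwise_disjoint_get_of_nodup_flatten {L : List (List α)} (h : L.flatten.Nodup) :
    Pairwise (List.Disjoint on L.get) := by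
  have hlt := List.pairwise_iff_get.1 (List.nodup_flatten.1 h).2
  intro i j hij
  obtain hij | hji := hij.lt_or_gt
  · exact hlt i j hij
  · exact (hlt j i hji).symm

theorem ncard_inter_mem_list (A : Set α) [DecidablePred (· ∈ A)] {l : List α} (hl : l.Nodup) :
    (A ∩ {v | v ∈ l}).ncard = l.countP (· ∈ A) := by
  classical
  have hset : A ∩ {v | v ∈ l} = (l.filter (· ∈ A)).toFinset := by
    ext v
    simp [and_comm]
  rw [hset, Set.ncard_coe_finset, List.toFinset_card_of_nodup (hl.filter _),
    List.countP_eq_length_filter]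

end List

namespace Dgraph

open scoped Function

variable {V : Type} {D : Dgraph V} {A B X Y : Set V} {P Q : List V} {ℓ : ℕ}

theorem IsPath.infix (hP : D.IsPath P) (hQP : Q <:+: P) : D.IsPath Q :=
  ⟨hP.1.sublist hQP.sublist, hP.2.infix hQP⟩

theorem WellLinked.subset (hA : D.WellLinked A) (hBA : B ⊆ A) : D.WellLinked B :=
  fun X Y hX hY => hA X Y (hX.trans hBA) (hY.trans hBA)

theorem WellLinked.hasDisjointPaths (hA : D.WellLinked A) (hXA : X ⊆ A) (hYA : Y ⊆ A)
    (hXY : Disjoint X Y) (hX : X.ncard = ℓ) (hY : Y.ncard = ℓ) : D.HasDisjointPaths X Y ℓ :=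
  hX ▸ hA X Y hXA hYA hXY (hX.trans hY.symm)

/-- `(Ps, Ain, Aout)` is an `ℓ`-linked path system in `D`, indexed by `ι`; the linkages are only
asserted to exist, and the order of `Ain i` and `Aout i` on `Ps i` is expressed by cutting `Ps i`
into two lists. -/
structure IsLinkedPathSystem {ι : Type*} (D : Dgraph V) (ℓ : ℕ) (Ps : ι → List V)
    (Ain Aout : ι → Set V) : Prop where
  isPath : ∀ i, D.IsPath (Ps i)
  disjoint : ∀ i j, i ≠ j → ∀ v, v ∈ Ps i → v ∉ Ps j
  wellLinked : ∀ i, D.WellLinked (Ain i) ∧ (Ain i).ncard = ℓ ∧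
    D.WellLinked (Aout i) ∧ (Aout i).ncard = ℓ
  subset : ∀ i, Ain i ∪ Aout i ⊆ {v | v ∈ Ps i}
  before : ∀ i, ∃ l₁ l₂ : List V, Ps i = l₁ ++ l₂ ∧ Ain i ⊆ {v | v ∈ l₁} ∧ Aout i ⊆ {v | v ∈ l₂}
  linkage : ∀ i j, i ≠ j → D.HasDisjointPaths (Aout i) (Ain j) ℓ

theorem WellLinked.isLinkedPathSystem {ι : Type*} (hA : D.WellLinked A) {Q R : ι → List V}
    (hpath : ∀ i, D.IsPath (Q i ++ R i)) (hdisj : Pairwise (List.Disjoint on fun i => Q i ++ R i))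
    (hQ : ∀ i, (A ∩ {v | v ∈ Q i}).ncard = ℓ) (hR : ∀ i, (A ∩ {v | v ∈ R i}).ncard = ℓ) :
    D.IsLinkedPathSystem ℓ (fun i => Q i ++ R i) (fun i => A ∩ {v | v ∈ Q i})
      (fun i => A ∩ {v | v ∈ R i}) where
  isPath := hpath
  disjoint _ _ hij _ hvi hvj := hdisj hij hvi hvj
  wellLinked i := ⟨hA.subset Set.inter_subset_left, hQ i, hA.subset Set.inter_subset_left, hR i⟩
  subset i := Set.union_subset (fun _ hv => List.mem_append_left _ hv.2)
    fun _ hv => List.mem_append_right _ hv.2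
  before i := ⟨Q i, R i, rfl, Set.inter_subset_right, Set.inter_subset_right⟩
  linkage i j hij := by
    refine hA.hasDisjointPaths Set.inter_subset_left Set.inter_subset_left ?_ (hR i) (hQ j)
    exact Set.disjoint_left.2 fun _ hvi hvj =>
      hdisj hij (List.mem_append_right _ hvi.2) (List.mem_append_left _ hvj.2)

end Dgraph

open Dgraph in
theorem stmt15_general {V : Type} (D : Dgraph V) (ℓ p : ℕ) (P : List V) (hP : D.IsPath P)
    (A : Set V) (hAP : A ⊆ {v | v ∈ P}) (hA : D.WellLinked A) (hcard : 2 * ℓ * p ≤ A.ncard) :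
    ∃ (Ps : Fin p → List V) (Ain Aout : Fin p → Set V), D.IsLinkedPathSystem ℓ Ps Ain Aout := by
  classical
  have hcount : p * (2 * ℓ) ≤ P.countP (· ∈ A) := by
    rwa [← ncard_inter_mem_list A hP.1, Set.inter_eq_left.2 hAP, mul_comm]
  obtain ⟨L, rfl, hLP, hL⟩ := exists_flatten_prefix_and_countP_eq _ hcount
  have hdisj := pairwise_disjoint_get_of_nodup_flatten (hP.1.sublist hLP.sublist)
  have hpath : ∀ i, D.IsPath (L.get i) := fun i =>
    hP.infix ((infix_flatten_of_mem (L.get_mem i)).trans hLP.isInfix)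
  have hblock : ∀ i, (L.get i).countP (· ∈ A) = 2 * ℓ := fun i => hL _ (L.get_mem i)
  choose Q R hQR hQ using fun i => exists_append_eq_and_countP_eq (l := L.get i) (k := ℓ)
    (· ∈ A) (by rw [hblock]; omega)
  have hget : L.get = fun i => Q i ++ R i := (funext hQR).symm
  rw [hget] at hdisj
  simp only [hget, List.countP_append, hQ] at hpath hblock
  have hR : ∀ i, (R i).countP (· ∈ A) = ℓ := fun i => by
    have := hblock i
    omega
  exact ⟨_, _, _, hA.isLinkedPathSystem hpath hdisj
    (fun i => (ncard_inter_mem_list A (hpath i).1.of_append_left).trans (hQ i))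
    (fun i => (ncard_inter_mem_list A (hpath i).1.of_append_right).trans (hR i))⟩

open Dgraph in
/-- if `P` is a directed path in the finite digraph `D` and `A ⊆ V(P)` is a
well-linked set with `|A| = 2ℓp`, then `D` contains an `ℓ`-linked path system of order
`p`: pairwise vertex-disjoint paths `Ps 1, …, Ps p`, well-linked sets `Ain i`, `Aout i`
of order `ℓ` with `Ain i ∪ Aout i ⊆ V(Ps i)` where all of `Ain i` appears in `Ps i`
before all of `Aout i`, and for all `i ≠ j` a linkage of size `ℓ` from `Aout i`
to `Ain j`. -/
theorem stmt15 {V : Type} [Finite V] (D : Dgraph V) (ℓ p : ℕ) (hl : 1 ≤ ℓ)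
    (hp : 1 ≤ p) (P : List V) (hP : D.IsPath P) (A : Set V) (hAP : A ⊆ {v | v ∈ P})
    (hA : D.WellLinked A) (hcard : A.ncard = 2 * ℓ * p) :
    ∃ (Ps : Fin p → List V) (Ain Aout : Fin p → Set V),
      (∀ i, D.IsPath (Ps i)) ∧
      (∀ i j, i ≠ j → ∀ v, v ∈ Ps i → v ∉ Ps j) ∧
      (∀ i, D.WellLinked (Ain i) ∧ (Ain i).ncard = ℓ ∧
        D.WellLinked (Aout i) ∧ (Aout i).ncard = ℓ) ∧
      (∀ i, Ain i ∪ Aout i ⊆ {v | v ∈ Ps i}) ∧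
      (∀ i, ∃ l1 l2 : List V, Ps i = l1 ++ l2 ∧
        Ain i ⊆ {v | v ∈ l1} ∧ Aout i ⊆ {v | v ∈ l2}) ∧
      (∀ i j, i ≠ j → D.HasDisjointPaths (Aout i) (Ain j) ℓ) := by
  obtain ⟨Ps, Ain, Aout, h⟩ := stmt15_general D ℓ p P hP A hAP hA hcard.ge
  exact ⟨Ps, Ain, Aout, h.isPath, h.disjoint, h.wellLinked, h.subset, h.before, h.linkage⟩
end
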